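/- arXiv:2301.07031 — 3 statements merged into one kernel-verified Lean document; each statement's English description precedes it below -/
import Mathlib

section
/- Let λ > 0, let x ∈ ℝ³ and r > 0, and let φ be a smooth real-valued function defined on an open neighborhood of the closed ball B(x, r) ⊂ ℝ³ satisfying Δφ = −λφ there. Then ∫_{‖x−y‖ ≤ r} φ(y)/‖y−x‖ dy = 4π · (1 − cos(√λ · r))/λ · φ(x), where the integral is the Lebesgue integral over the closed ball B(x, r). -/
open scoped Real
open MeasureTheory

/-- The Euclidean Laplacian `Δf(x) = Σᵢ ∂²f/∂xᵢ²(x)` of `f : ℝ^d → ℝ`. -/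
noncomputable def euclidLaplacian {d : ℕ} (f : EuclideanSpace ℝ (Fin d) → ℝ)
    (x : EuclideanSpace ℝ (Fin d)) : ℝ :=
  ∑ i, fderiv ℝ (fun y => fderiv ℝ f y (EuclideanSpace.single i 1)) x (EuclideanSpace.single i 1)

/-!
Write `M s` for the integral of `φ` over the sphere of radius `s` about `x`, normalised by pulling
it back to the unit sphere; in polar coordinates the Coulomb integral is `∫ s in 0..r, s • M s`.
Testing Green's identity against radial functions shows, by the du Bois-Reymond lemma, that the
flux `s ^ (n - 1) • M' s` has derivative `s ^ (n - 1)` times the sphere integral of `Δ φ`. For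
`n = 3` and an eigenfunction this says `(s • M s)'' = -λ • (s • M s)`, and integrating a Wronskian
evaluates `∫ s in 0..r, s • M s` in terms of the initial slope `M 0 = 4 * π * φ x`.
-/

open Set Filter Topology Metric Module InnerProductSpace
open scoped ContDiff Gradient Laplacian Manifold

section ParametricIntegral

variable {X F : Type*} [TopologicalSpace X] [CompactSpace X] [MeasurableSpace X]
  [OpensMeasurableSpace X] {μ : Measure X} [IsFiniteMeasure μ]
  [NormedAddCommGroup F] [NormedSpace ℝ F]

lemma hasDerivAt_integral_of_compactSpace {g g' : ℝ → X → F}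
    (hg : ∀ t, Continuous (g t)) (hg' : Continuous (Function.uncurry g'))
    (h : ∀ t x, HasDerivAt (g · x) (g' t x) t) (t : ℝ) :
    HasDerivAt (fun t => ∫ x, g t x ∂μ) (∫ x, g' t x ∂μ) t := by
  obtain ⟨C, hC⟩ := (isCompact_Icc.prod isCompact_univ).exists_bound_of_continuousOn
    (hg'.continuousOn (s := Icc (t - 1) (t + 1) ×ˢ univ))
  have integrable (s : ℝ) : Integrable (g s) μ :=
    (hg s).integrable_of_hasCompactSupport (.of_compactSpace _)
  have integrable' : Integrable (g' t) μ :=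
    (hg'.comp (Continuous.prodMk_right t)).integrable_of_hasCompactSupport (.of_compactSpace _)
  exact (hasDerivAt_integral_of_dominated_loc_of_deriv_le
    (Icc_mem_nhds (sub_one_lt t) (lt_add_one t))
    (.of_forall fun s => (integrable s).aestronglyMeasurable) (integrable t)
    integrable'.aestronglyMeasurable
    (.of_forall fun x s hs => hC (s, x) ⟨hs, mem_univ x⟩) (integrable_const C)
    (.of_forall fun x s _ => h s x)).2

end ParametricIntegral

section ContDiff

variable {E F : Type*} [NormedAddCommGroup E] [NormedSpace ℝ E] [FiniteDimensional ℝ E]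
  [NormedAddCommGroup F] [NormedSpace ℝ F]

lemma exists_contDiff_eventuallyEq_nhdsSet {f : E → F} {K U : Set E} {n : ℕ∞}
    (hK : IsClosed K) (hU : IsOpen U) (hKU : K ⊆ U) (hf : ContDiffOn ℝ n f U) :
    ∃ g : E → F, ContDiff ℝ n g ∧ g =ᶠ[𝓝ˢ K] f := by
  obtain ⟨χ, hχ0, hχ1, -⟩ := exists_contMDiffMap_zero_one_nhds_of_isClosed (n := n) 𝓘(ℝ, E)
    hU.isClosed_compl hK (disjoint_compl_left_iff_subset.2 hKU)
  refine ⟨fun y => χ y • f y, contDiff_iff_contDiffAt.2 fun y => ?_, ?_⟩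
  · by_cases hy : y ∈ U
    · exact χ.contMDiff.contDiff.contDiffAt.smul (hf.contDiffAt (hU.mem_nhds hy))
    · have : (fun z => χ z • f z) =ᶠ[𝓝 y] fun _ => 0 := by
        filter_upwards [hχ0.filter_mono (nhds_le_nhdsSet hy)] with z hz
        rw [hz, zero_smul]
      exact contDiffAt_const.congr_of_eventuallyEq this
  · filter_upwards [hχ1] with y hy
    rw [hy, one_smul]

end ContDiff

section Laplacian

variable {E F : Type*} [NormedAddCommGroup E] [InnerProductSpace ℝ E] [FiniteDimensional ℝ E]
  [NormedAddCommGroup F] [NormedSpace ℝ F]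

lemma laplacian_eq_sum_fderiv_fderiv {ι : Type*} [Fintype ι] (b : OrthonormalBasis ι ℝ E)
    {f : E → F} {y : E} (hf : ContDiffAt ℝ 2 f y) :
    Δ f y = ∑ i, fderiv ℝ (fun z => fderiv ℝ f z (b i)) y (b i) := by
  have hf' : DifferentiableAt ℝ (fderiv ℝ f) y :=
    (hf.fderiv_right (m := 1) le_rfl).differentiableAt one_ne_zero
  rw [laplacian_eq_iteratedFDeriv_orthonormalBasis f b]
  simp [iteratedFDeriv_two_apply, fderiv_clm_apply hf' (differentiableAt_const _)]

lemma sum_fderiv_smul_fderiv {ι : Type*} [Fintype ι] (b : OrthonormalBasis ι ℝ E)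
    (g : E → ℝ) (f : E → F) (y : E) :
    ∑ i, fderiv ℝ g y (b i) • fderiv ℝ f y (b i) = fderiv ℝ f y (∇ g y) := by
  conv_rhs => rw [← b.sum_repr' (∇ g y)]
  simp [inner_gradient_right]

lemma continuous_laplacian {f : E → F} (hf : ContDiff ℝ 2 f) : Continuous (Δ f) := by
  rw [laplacian_eq_iteratedFDeriv_stdOrthonormalBasis]
  have := hf.continuous_iteratedFDeriv (m := 2) le_rfl
  fun_prop

variable [MeasurableSpace E] [BorelSpace E]

theorem integral_smul_laplacian_eq_neg_integral_fderiv_gradient {g : E → ℝ} {f : E → F}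
    (hg : ContDiff ℝ 1 g) (hg_supp : HasCompactSupport g) (hf : ContDiff ℝ 2 f) :
    ∫ y, g y • Δ f y = -∫ y, fderiv ℝ f y (∇ g y) := by
  let b := stdOrthonormalBasis ℝ E
  have hf' : ContDiff ℝ 1 (fderiv ℝ f) := hf.fderiv_right le_rfl
  have hfb (i) : ContDiff ℝ 1 fun y => fderiv ℝ f y (b i) := hf'.clm_apply contDiff_const
  have int_left (i) : Integrable fun y => g y • fderiv ℝ (fun z => fderiv ℝ f z (b i)) y (b i) :=
    Continuous.integrable_of_hasCompactSupport (by fun_prop) hg_supp.smul_right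
  have int_right (i) : Integrable fun y => fderiv ℝ g y (b i) • fderiv ℝ f y (b i) :=
    Continuous.integrable_of_hasCompactSupport (by fun_prop)
      (hg_supp.fderiv_apply (𝕜 := ℝ) (b i)).smul_right
  simp only [laplacian_eq_sum_fderiv_fderiv b hf.contDiffAt, Finset.smul_sum,
    ← sum_fderiv_smul_fderiv b]
  rw [integral_finsetSum _ fun i _ => int_left i, integral_finsetSum _ fun i _ => int_right i,
    ← Finset.sum_neg_distrib]
  refine Finset.sum_congr rfl fun i _ => ?_
  exact integral_smul_fderiv_eq_neg_fderiv_smul_of_integrable (int_right i) (int_left i)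
    (Continuous.integrable_of_hasCompactSupport (by fun_prop) hg_supp.smul_right)
    (fun y _ => hg.differentiable one_ne_zero y) (fun y _ => (hfb i).differentiable one_ne_zero y)

end Laplacian

section Radial

lemma hasCompactSupport_comp_norm_sub {E : Type*} [SeminormedAddCommGroup E] [ProperSpace E]
    {g : ℝ → ℝ} (hg : HasCompactSupport g) (x : E) : HasCompactSupport fun y => g ‖y - x‖ := by
  obtain ⟨R, hR⟩ := hg.isCompact.isBounded.subset_closedBall 0
  refine .intro' (isCompact_closedBall x R) isClosed_closedBall fun y hy =>
    image_eq_zero_of_notMem_tsupport fun h => hy ?_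
  simpa [dist_eq_norm] using hR h

variable {E : Type*} [NormedAddCommGroup E] [InnerProductSpace ℝ E]

lemma contDiff_comp_norm_sub {n : ℕ∞} {g : ℝ → ℝ} (hg : ContDiff ℝ n g)
    (hg_supp : tsupport g ⊆ Ioi 0) (x : E) : ContDiff ℝ n fun y => g ‖y - x‖ := by
  refine contDiff_iff_contDiffAt.2 fun y => ?_
  rcases eq_or_ne y x with rfl | hy
  · have hg0 : ∀ᶠ z in 𝓝 y, g ‖z - y‖ = 0 := by
      have : Tendsto (fun z => ‖z - y‖) (𝓝 y) (𝓝 0) := tendsto_norm_sub_self y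
      exact this.eventually (notMem_tsupport_iff_eventuallyEq.1 fun h => (hg_supp h).out.false)
    exact contDiffAt_const.congr_of_eventuallyEq hg0
  · exact hg.contDiffAt.comp y ((contDiffAt_id.sub contDiffAt_const).norm ℝ (sub_ne_zero.2 hy))

variable [CompleteSpace E]

lemma hasGradientAt_norm {y : E} (hy : y ≠ 0) : HasGradientAt norm (‖y‖⁻¹ • y) y := by
  have h := (hasStrictFDerivAt_norm_sq y).hasFDerivAt.sqrt (pow_ne_zero 2 (norm_ne_zero_iff.2 hy))
  simp only [Real.sqrt_sq (norm_nonneg _)] at h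
  refine hasGradientAt_iff_hasFDerivAt.2 (h.congr_fderiv ?_)
  ext v
  simp only [one_div, mul_inv_rev, smul_apply, coe_innerSL_apply, nsmul_eq_mul,
    Nat.cast_ofNat, smul_eq_mul, map_smul, InnerProductSpace.toDual_apply_apply]
  ring

lemma gradient_comp_norm_sub {g : ℝ → ℝ} (hg : Differentiable ℝ g) {x y : E} (hy : y ≠ x) :
    ∇ (fun z => g ‖z - x‖) y = (deriv g ‖y - x‖ / ‖y - x‖) • (y - x) := by
  have hnorm := (hasGradientAt_norm (sub_ne_zero.2 hy)).hasFDerivAt.comp y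
    ((hasFDerivAt_id y).sub_const x)
  have hcomp := (hg ‖y - x‖).hasDerivAt.comp_hasFDerivAt y hnorm
  refine (hasGradientAt_iff_hasFDerivAt.2 (hcomp.congr_fderiv ?_)).gradient
  ext v
  simp only [map_smul, map_sub, ContinuousLinearMap.comp_id, smul_apply,
    sub_apply, InnerProductSpace.toDual_apply_apply, smul_eq_mul]
  ring

end Radial

section SphereIntegral

lemma hasDerivAt_add_smul {E : Type*} [NormedAddCommGroup E] [NormedSpace ℝ E] (x v : E) (t : ℝ) :
    HasDerivAt (fun s : ℝ => x + s • v) v t := by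
  simpa using ((hasDerivAt_id t).smul_const v).const_add x

variable {E F : Type*} [NormedAddCommGroup E] [InnerProductSpace ℝ E] [FiniteDimensional ℝ E]
  [MeasurableSpace E] [BorelSpace E] [NormedAddCommGroup F] [NormedSpace ℝ F]

/-- The integral of `f` over the sphere of centre `x` and radius `s`, pulled back to the unit
sphere: the surface integral divided by `s ^ (finrank ℝ E - 1)`, extended to all real `s`. -/
noncomputable def sphereIntegral (f : E → F) (x : E) (s : ℝ) : F :=
  ∫ w : sphere (0 : E) 1, f (x + s • (w : E)) ∂(volume : Measure E).toSphere

/-- The outward flux of the gradient of `f` through the sphere of centre `x` and radius `s`, with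
the normalisation of `sphereIntegral`. -/
noncomputable def sphereFlux (f : E → F) (x : E) (s : ℝ) : F :=
  ∫ w : sphere (0 : E) 1, fderiv ℝ f (x + s • (w : E)) w ∂(volume : Measure E).toSphere

lemma sphereIntegral_zero [CompleteSpace F] (hE : finrank ℝ E = 3) (f : E → F) (x : E) :
    sphereIntegral f x 0 = (4 * π) • f x := by
  have hvol : (volume : Measure E).toSphere.real univ = 4 * π := by
    rw [Measure.toSphere_real_apply_univ, measureReal_def,
      InnerProductSpace.volume_ball_of_dim_odd (k := 1) hE, hE]
    have : (0 : ℝ) ≤ π * 4 / 3 := by positivity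
    norm_num [Nat.doubleFactorial, ENNReal.toReal_ofReal this]
    ring
  simp [sphereIntegral, hvol]

lemma sphereIntegral_congr {f g : E → F} {x : E} {s : ℝ} (hs : 0 ≤ s)
    (h : EqOn f g (sphere x s)) : sphereIntegral f x s = sphereIntegral g x s :=
  integral_congr_ae <| .of_forall fun w => h <| by simp [norm_smul, abs_of_nonneg hs]

lemma sphereIntegral_smul (c : ℝ) (f : E → F) (x : E) (s : ℝ) :
    sphereIntegral (fun y => c • f y) x s = c • sphereIntegral f x s :=
  integral_smul c _

lemma sphereIntegral_comp_norm_sub_smul (g : ℝ → ℝ) (f : E → F) (x : E) {s : ℝ} (hs : 0 ≤ s) :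
    sphereIntegral (fun y => g ‖y - x‖ • f y) x s = g s • sphereIntegral f x s := by
  rw [← sphereIntegral_smul]
  refine sphereIntegral_congr hs fun y hy => ?_
  rw [← dist_eq_norm, mem_sphere.1 hy]

lemma continuous_sphereIntegral {f : E → F} (hf : Continuous f) (x : E) :
    Continuous (sphereIntegral f x) := by
  have := continuous_parametric_integral_of_continuous (μ := (volume : Measure E).toSphere)
    (f := fun (s : ℝ) (w : sphere (0 : E) 1) => f (x + s • (w : E)))
    (by unfold Function.uncurry; fun_prop) isCompact_univ
  simp only [Measure.restrict_univ] at this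
  exact this

lemma hasDerivAt_sphereIntegral {f : E → F} (hf : ContDiff ℝ 1 f) (x : E) (s : ℝ) :
    HasDerivAt (sphereIntegral f x) (sphereFlux f x s) s := by
  refine hasDerivAt_integral_of_compactSpace
    (g := fun s (w : sphere (0 : E) 1) => f (x + s • (w : E)))
    (g' := fun s (w : sphere (0 : E) 1) => fderiv ℝ f (x + s • (w : E)) w)
    (fun t => by fun_prop) (by unfold Function.uncurry; fun_prop) (fun t w => ?_) s
  exact (hf.differentiable one_ne_zero _).hasFDerivAt.comp_hasDerivAt t (hasDerivAt_add_smul x w t)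

lemma contDiff_sphereFlux {f : E → F} (hf : ContDiff ℝ 2 f) (x : E) :
    ContDiff ℝ 1 (sphereFlux f x) := by
  have hf' : ContDiff ℝ 1 (fderiv ℝ f) := hf.fderiv_right le_rfl
  let flux' (s : ℝ) (w : sphere (0 : E) 1) : F := fderiv ℝ (fderiv ℝ f) (x + s • (w : E)) w w
  have flux'_cont : Continuous (Function.uncurry flux') := by
    unfold flux' Function.uncurry
    fun_prop
  have hderiv (s : ℝ) : HasDerivAt (sphereFlux f x)
      (∫ w, flux' s w ∂(volume : Measure E).toSphere) s := by
    refine hasDerivAt_integral_of_compactSpace (fun t => by fun_prop) flux'_cont (fun t w => ?_) s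
    have := (hf'.differentiable one_ne_zero _).hasFDerivAt.comp_hasDerivAt t
      (hasDerivAt_add_smul x w t)
    simpa using this.clm_apply (hasDerivAt_const t (w : E))
  refine contDiff_one_iff_deriv.2 ⟨fun s => (hderiv s).differentiableAt, ?_⟩
  rw [funext fun s => (hderiv s).deriv]
  simpa only [Measure.restrict_univ] using
    continuous_parametric_integral_of_continuous flux'_cont isCompact_univ

lemma sphereIntegral_fderiv_gradient_comp_norm_sub {g : ℝ → ℝ} (hg : Differentiable ℝ g)
    (f : E → F) (x : E) {s : ℝ} (hs : 0 < s) :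
    sphereIntegral (fun y => fderiv ℝ f y (∇ (fun z => g ‖z - x‖) y)) x s =
      deriv g s • sphereFlux f x s := by
  rw [sphereFlux, ← integral_smul]
  refine integral_congr_ae (.of_forall fun w => ?_)
  have hw : (w : E) ≠ 0 := ne_zero_of_mem_unit_sphere w
  simp [gradient_comp_norm_sub hg, hs.ne', hw, norm_smul, abs_of_pos hs, smul_smul]

section Polar

variable [Nontrivial E]

lemma integral_eq_integral_Ioi_sphereIntegral {f : E → F} (hf : Integrable f) (x : E) :
    ∫ y, f y = ∫ s in Ioi (0 : ℝ), s ^ (finrank ℝ E - 1) • sphereIntegral f x s := by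
  let n := finrank ℝ E - 1
  let σ := (volume : Measure E).toSphere
  let fPolar (p : sphere (0 : E) 1 × Ioi (0 : ℝ)) : F := f (x + (p.2 : ℝ) • (p.1 : E))
  have hpolar := (volume : Measure E).measurePreserving_homeomorphUnitSphereProd
  have hemb := (homeomorphUnitSphereProd E).measurableEmbedding
  have hcomp (y : ({0}ᶜ : Set E)) : fPolar (homeomorphUnitSphereProd E y) = f (x + y) := by
    have hy : ‖(y : E)‖ ≠ 0 := norm_ne_zero_iff.2 y.2
    simp [fPolar, smul_smul, hy]
  have hint : Integrable fPolar (σ.prod (.volumeIoiPow n)) := by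
    rw [← hpolar.integrable_comp_emb hemb, Function.comp_def, funext hcomp]
    exact (integrableOn_iff_comap_subtypeVal (measurableSet_singleton (0 : E)).compl).1
      (hf.comp_add_left x).integrableOn
  calc
    ∫ y, f y = ∫ y : ({0}ᶜ : Set E), f (x + y) ∂((volume : Measure E).comap (↑)) := by
        rw [integral_subtype_comap (measurableSet_singleton _).compl (f <| x + ·),
          restrict_compl_singleton, integral_add_left_eq_self]
    _ = ∫ p, fPolar p ∂(σ.prod (.volumeIoiPow n)) := by
        rw [← hpolar.integral_comp hemb]
        exact integral_congr_ae (.of_forall fun y => (hcomp y).symm)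
    _ = ∫ s : Ioi (0 : ℝ), sphereIntegral f x s ∂(.volumeIoiPow n) := integral_prod_symm _ hint
    _ = ∫ s in Ioi (0 : ℝ), s ^ n • sphereIntegral f x s := by
        simp only [Measure.volumeIoiPow, ENNReal.ofReal]
        rw [integral_withDensity_eq_integral_smul
            (measurable_subtype_coe.pow_const _).real_toNNReal,
          integral_subtype_comap measurableSet_Ioi
            fun s => (s ^ n).toNNReal • sphereIntegral f x s]
        refine setIntegral_congr_fun measurableSet_Ioi fun s hs => ?_
        simp only [NNReal.smul_def, Real.coe_toNNReal _ (pow_nonneg hs.out.le _)]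

lemma setIntegral_closedBall_eq_intervalIntegral_sphereIntegral {f : E → F} {x : E} {r : ℝ}
    (hr : 0 ≤ r) (hf : IntegrableOn f (closedBall x r)) :
    ∫ y in closedBall x r, f y =
      ∫ s in (0 : ℝ)..r, s ^ (finrank ℝ E - 1) • sphereIntegral f x s := by
  have hind (y : E) : (closedBall x r).indicator f y =
      (Iic r).indicator (1 : ℝ → ℝ) ‖y - x‖ • f y := by
    by_cases hy : ‖y - x‖ ≤ r <;> simp [indicator, dist_eq_norm, hy]
  rw [← integral_indicator measurableSet_closedBall, integral_eq_integral_Ioi_sphereIntegral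
      ((integrable_indicator_iff measurableSet_closedBall).2 hf) x,
    intervalIntegral.integral_of_le hr, ← Ioi_inter_Iic, ← setIntegral_indicator measurableSet_Iic]
  refine setIntegral_congr_fun measurableSet_Ioi fun s hs => ?_
  simp only [funext hind, sphereIntegral_comp_norm_sub_smul _ f x hs.out.le]
  by_cases hsr : s ≤ r <;> simp [indicator, hsr]

lemma integral_smul_sphereIntegral_laplacian {g : ℝ → ℝ} (hg : ContDiff ℝ 1 g)
    (hg_compact : HasCompactSupport g) (hg_pos : tsupport g ⊆ Ioi 0) {f : E → F}
    (hf : ContDiff ℝ 2 f) (x : E) :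
    ∫ s in Ioi (0 : ℝ), s ^ (finrank ℝ E - 1) • g s • sphereIntegral (Δ f) x s =
      -∫ s in Ioi (0 : ℝ), s ^ (finrank ℝ E - 1) • deriv g s • sphereFlux f x s := by
  let η (y : E) : ℝ := g ‖y - x‖
  have hη : ContDiff ℝ 1 η := contDiff_comp_norm_sub hg hg_pos x
  have hη_supp : HasCompactSupport η := hasCompactSupport_comp_norm_sub hg_compact x
  have hη' : Continuous (∇ η) :=
    (toDual ℝ E).symm.continuous.comp (hη.continuous_fderiv one_ne_zero)
  have hη'_supp : HasCompactSupport (∇ η) := (hη_supp.fderiv ℝ).comp_left (map_zero _)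
  have hf' := hf.continuous_fderiv two_ne_zero
  have int_left : Integrable fun y => η y • Δ f y :=
    (hη.continuous.smul (continuous_laplacian hf)).integrable_of_hasCompactSupport
      hη_supp.smul_right
  have int_right : Integrable fun y => fderiv ℝ f y (∇ η y) :=
    (hf'.clm_apply hη').integrable_of_hasCompactSupport <|
      hη'_supp.mono fun y hy h => hy (by simp [h])
  calc
    _ = ∫ y, η y • Δ f y := by
      rw [integral_eq_integral_Ioi_sphereIntegral int_left x]
      refine setIntegral_congr_fun measurableSet_Ioi fun s hs => ?_
      simp only [η, sphereIntegral_comp_norm_sub_smul g (Δ f) x hs.out.le]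
    _ = -∫ y, fderiv ℝ f y (∇ η y) :=
      integral_smul_laplacian_eq_neg_integral_fderiv_gradient hη hη_supp hf
    _ = _ := by
      rw [integral_eq_integral_Ioi_sphereIntegral int_right x]
      refine congrArg Neg.neg (setIntegral_congr_fun measurableSet_Ioi fun s hs => ?_)
      simp only [η, sphereIntegral_fderiv_gradient_comp_norm_sub
        (hg.differentiable one_ne_zero) f x hs.out]

end Polar

end SphereIntegral

section DuBoisReymond

variable {F : Type*} [NormedAddCommGroup F] [NormedSpace ℝ F]

lemma integral_smul_deriv_eq_neg_integral_deriv_smul {g : ℝ → ℝ} {u : ℝ → F}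
    (hg : ContDiff ℝ 1 g) (hg_supp : HasCompactSupport g) (hu : ContDiff ℝ 1 u) :
    ∫ s, g s • deriv u s = -∫ s, deriv g s • u s := by
  have hg_cont := hg.continuous
  have hu_cont := hu.continuous
  have hg' := hg.continuous_deriv le_rfl
  have hu' := hu.continuous_deriv le_rfl
  exact integral_bilinear_hasDerivAt_right_eq_neg_left_of_integrable
    (L := ContinuousLinearMap.lsmul ℝ ℝ)
    (fun s _ => (hg.differentiable one_ne_zero s).hasDerivAt)
    (fun s _ => (hu.differentiable one_ne_zero s).hasDerivAt)
    ((hg_cont.smul hu').integrable_of_hasCompactSupport hg_supp.smul_right)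
    ((hg'.smul hu_cont).integrable_of_hasCompactSupport hg_supp.deriv.smul_right)
    ((hg_cont.smul hu_cont).integrable_of_hasCompactSupport hg_supp.smul_right)

lemma eqOn_deriv_of_integral_smul_eq_neg_integral_deriv_smul [CompleteSpace F]
    {u v : ℝ → F} {U : Set ℝ} (hU : IsOpen U) (hu : ContDiff ℝ 1 u) (hv : Continuous v)
    (h : ∀ g : ℝ → ℝ, ContDiff ℝ ∞ g → HasCompactSupport g → tsupport g ⊆ U →
      ∫ s, g s • v s = -∫ s, deriv g s • u s) :
    EqOn (deriv u) v U := by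
  have hu' := hu.continuous_deriv le_rfl
  have hae : ∀ᵐ s, s ∈ U → deriv u s - v s = 0 := by
    refine hU.ae_eq_zero_of_integral_contDiff_smul_eq_zero
      ((hu'.fun_sub hv).locallyIntegrable.locallyIntegrableOn U) fun g hg hg_supp hgU => ?_
    have integrable_smul {w : ℝ → F} (hw : Continuous w) : Integrable fun s => g s • w s :=
      (hg.continuous.smul hw).integrable_of_hasCompactSupport hg_supp.smul_right
    simp only [smul_sub]
    rw [integral_sub (integrable_smul hu') (integrable_smul hv),
      integral_smul_deriv_eq_neg_integral_deriv_smul (contDiff_infty.1 hg 1) hg_supp hu,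
      h g hg hg_supp hgU, sub_self]
  refine Measure.eqOn_open_of_ae_eq (μ := volume) ?_ hU hu'.continuousOn hv.continuousOn
  exact (ae_restrict_iff' hU.measurableSet).2 (hae.mono fun s hs hsU => sub_eq_zero.1 (hs hsU))

end DuBoisReymond

section DivergenceTheorem

variable {E F : Type*} [NormedAddCommGroup E] [InnerProductSpace ℝ E] [FiniteDimensional ℝ E]
  [MeasurableSpace E] [BorelSpace E] [Nontrivial E]
  [NormedAddCommGroup F] [NormedSpace ℝ F] [CompleteSpace F]

theorem hasDerivAt_pow_smul_sphereFlux {f : E → F} (hf : ContDiff ℝ 2 f) (x : E) {s : ℝ}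
    (hs : 0 < s) :
    HasDerivAt (fun t => t ^ (finrank ℝ E - 1) • sphereFlux f x t)
      (s ^ (finrank ℝ E - 1) • sphereIntegral (Δ f) x s) s := by
  have hu : ContDiff ℝ 1 fun t => t ^ (finrank ℝ E - 1) • sphereFlux f x t :=
    (contDiff_id.pow _).smul (contDiff_sphereFlux hf x)
  have hv : Continuous fun t => t ^ (finrank ℝ E - 1) • sphereIntegral (Δ f) x t :=
    (continuous_id.pow _).smul (continuous_sphereIntegral (continuous_laplacian hf) x)
  suffices hderiv : EqOn (deriv fun t => t ^ (finrank ℝ E - 1) • sphereFlux f x t)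
      (fun t => t ^ (finrank ℝ E - 1) • sphereIntegral (Δ f) x t) (Ioi 0) from
    (hu.differentiable one_ne_zero s).hasDerivAt.congr_deriv (hderiv hs)
  refine eqOn_deriv_of_integral_smul_eq_neg_integral_deriv_smul isOpen_Ioi hu hv
    fun g hg hg_supp hg_pos => ?_
  have hweak := integral_smul_sphereIntegral_laplacian (contDiff_infty.1 hg 1)
    hg_supp hg_pos hf x
  have hg_zero {t : ℝ} (ht : t ∉ Ioi 0) : g t = 0 :=
    image_eq_zero_of_notMem_tsupport fun h => ht (hg_pos h)
  have hg'_zero {t : ℝ} (ht : t ∉ Ioi 0) : deriv g t = 0 :=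
    image_eq_zero_of_notMem_tsupport fun h => ht (hg_pos (tsupport_deriv_subset h))
  rw [setIntegral_eq_integral_of_forall_compl_eq_zero fun t ht => by simp [hg_zero ht],
    setIntegral_eq_integral_of_forall_compl_eq_zero fun t ht => by simp [hg'_zero ht]] at hweak
  simpa only [smul_comm (_ ^ _ : ℝ)] using hweak

end DivergenceTheorem

section ODE

variable {F : Type*} [NormedAddCommGroup F] [NormedSpace ℝ F] [CompleteSpace F]

-- The function `v s = (1 - cos (k * (r - s))) / k ^ 2` solves `v'' + k ^ 2 * v = 1` with
-- `v r = v' r = 0`, so `h' • v - h • v'` has derivative `-h` and boundary terms only at `0`.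
lemma intervalIntegral_eq_one_sub_cos_smul_of_hasDerivAt {h h' : ℝ → F} {k r : ℝ} (hk : k ≠ 0)
    (hr : 0 ≤ r) (h_zero : h 0 = 0) (hh' : Continuous h')
    (h_deriv : ∀ s, HasDerivAt h (h' s) s)
    (h_deriv' : ∀ s ∈ Ioo 0 r, HasDerivAt h' (-k ^ 2 • h s) s) :
    ∫ s in (0 : ℝ)..r, h s = ((1 - Real.cos (k * r)) / k ^ 2) • h' 0 := by
  let v (s : ℝ) : ℝ := (1 - Real.cos (k * (r - s))) / k ^ 2
  let v' (s : ℝ) : ℝ := -Real.sin (k * (r - s)) / k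
  have hh : Continuous h := continuous_iff_continuousAt.2 fun s => (h_deriv s).continuousAt
  have harg (s : ℝ) : HasDerivAt (fun s => k * (r - s)) (-k) s := by
    simpa using ((hasDerivAt_id s).const_sub r).const_mul k
  have hv (s : ℝ) : HasDerivAt v (v' s) s := by
    refine (((harg s).cos.const_sub 1).div_const (k ^ 2)).congr_deriv ?_
    simp only [v']
    field_simp
  have hv' (s : ℝ) : HasDerivAt v' (1 - k ^ 2 * v s) s := by
    refine ((harg s).sin.neg.div_const k).congr_deriv ?_
    simp only [v]
    field_simp
    ring
  have hW (s) (hs : s ∈ Ioo 0 r) : HasDerivAt (fun s => v s • h' s - v' s • h s) (-h s) s := by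
    refine (((hv s).smul (h_deriv' s hs)).sub ((hv' s).smul (h_deriv s))).congr_deriv ?_
    module
  have hW_cont : Continuous fun s => v s • h' s - v' s • h s := by fun_prop
  have hFTC := intervalIntegral.integral_eq_sub_of_hasDerivAt_of_le hr hW_cont.continuousOn hW
    (hh.neg.intervalIntegrable 0 r)
  simpa [v, v', h_zero] using hFTC

end ODE

section Coulomb

variable {E F : Type*} [NormedAddCommGroup E] [InnerProductSpace ℝ E] [FiniteDimensional ℝ E]
  [MeasurableSpace E] [BorelSpace E] [NormedAddCommGroup F] [NormedSpace ℝ F]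

lemma integrableOn_norm_sub_inv_smul (hE : 1 < finrank ℝ E) {f : E → F} (x : E) (r : ℝ)
    (hf : ContinuousOn f (closedBall x r)) :
    IntegrableOn (fun y => ‖y - x‖⁻¹ • f y) (closedBall x r) := by
  have hloc : LocallyIntegrable fun y : E => ‖y‖⁻¹ :=
    locallyIntegrable_of_norm_le_rpow (C := 1) (α := 1) hE.le (by exact_mod_cast hE)
      (.of_forall fun y => by simp [Real.rpow_neg_one]) (by fun_prop)
  have hkernel : IntegrableOn (fun y => ‖y - x‖⁻¹) (closedBall x r) := by
    have h := (measurePreserving_sub_right volume x).integrableOn_comp_preimage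
      (MeasurableEquiv.subRight x).measurableEmbedding (f := fun y : E => ‖y‖⁻¹)
      (s := closedBall 0 r)
    have hball : (· - x) ⁻¹' closedBall 0 r = closedBall x r := by
      ext y; simp [dist_eq_norm]
    rw [hball] at h
    exact h.2 (hloc.integrableOn_isCompact (isCompact_closedBall 0 r))
  exact hkernel.smul_continuousOn hf (isCompact_closedBall x r)

lemma setIntegral_closedBall_norm_sub_inv_smul (hE : finrank ℝ E = 3) {f : E → F} {x : E} {r : ℝ}
    (hr : 0 ≤ r) (hf : ContinuousOn f (closedBall x r)) :
    ∫ y in closedBall x r, ‖y - x‖⁻¹ • f y = ∫ s in (0 : ℝ)..r, s • sphereIntegral f x s := by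
  have : Nontrivial E := nontrivial_of_finrank_pos (R := ℝ) (by omega)
  rw [setIntegral_closedBall_eq_intervalIntegral_sphereIntegral hr
    (integrableOn_norm_sub_inv_smul (by omega) x r hf), hE]
  refine intervalIntegral.integral_congr fun s hs => ?_
  have hs : 0 ≤ s := (uIcc_of_le hr ▸ hs).1
  simp only [sphereIntegral_comp_norm_sub_smul (·⁻¹) f x hs, smul_smul]
  congr 1
  rcases eq_or_ne s 0 with rfl | hs0
  · simp
  · field_simp

lemma hasDerivAt_smul_sphereIntegral {f : E → F} (hf : ContDiff ℝ 1 f) (x : E) (s : ℝ) :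
    HasDerivAt (fun s => s • sphereIntegral f x s)
      (sphereIntegral f x s + s • sphereFlux f x s) s := by
  simpa [add_comm] using (hasDerivAt_id s).fun_smul (hasDerivAt_sphereIntegral hf x s)

variable [CompleteSpace F]

lemma hasDerivAt_sphereIntegral_add_smul_sphereFlux (hE : finrank ℝ E = 3) {f : E → F}
    (hf : ContDiff ℝ 2 f) (x : E) {s : ℝ} (hs : 0 < s) :
    HasDerivAt (fun s => sphereIntegral f x s + s • sphereFlux f x s)
      (s • sphereIntegral (Δ f) x s) s := by
  have : Nontrivial E := nontrivial_of_finrank_pos (R := ℝ) (by omega)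
  have hflux : HasDerivAt (fun t => t⁻¹ • t ^ 2 • sphereFlux f x t)
      (s • sphereIntegral (Δ f) x s - sphereFlux f x s) s := by
    have h := hasDerivAt_pow_smul_sphereFlux hf x hs
    rw [hE] at h
    refine ((hasDerivAt_inv hs.ne').smul h).congr_deriv ?_
    simp only [smul_smul]
    match_scalars <;> field_simp
  have heq : (fun t => t • sphereFlux f x t) =ᶠ[𝓝 s] fun t => t⁻¹ • t ^ 2 • sphereFlux f x t := by
    filter_upwards [lt_mem_nhds hs] with t ht
    rw [smul_smul, pow_two, inv_mul_cancel_left₀ ht.ne']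
  simpa using (hasDerivAt_sphereIntegral (hf.of_le one_le_two) x s).fun_add
    (hflux.congr_of_eventuallyEq heq)

theorem eigenfunction_coulomb_identity_general (hE : finrank ℝ E = 3) {lam : ℝ} (hlam : 0 < lam)
    {x : E} {r : ℝ} (hr : 0 ≤ r) {U : Set E} (hU : IsOpen U) (hBU : closedBall x r ⊆ U)
    {φ : E → F} (hφ : ContDiffOn ℝ 2 φ U) (heig : ∀ y ∈ ball x r, Δ φ y = -lam • φ y) :
    ∫ y in closedBall x r, ‖y - x‖⁻¹ • φ y =
      (4 * π * ((1 - Real.cos (√lam * r)) / lam)) • φ x := by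
  obtain ⟨f, hf, hfφ⟩ := exists_contDiff_eventuallyEq_nhdsSet (n := 2) isClosed_closedBall hU hBU hφ
  have hfφ_near {y : E} (hy : y ∈ closedBall x r) : f =ᶠ[𝓝 y] φ :=
    hfφ.filter_mono (nhds_le_nhdsSet hy)
  have hf_eig (s) (hs : s ∈ Ioo 0 r) : sphereIntegral (Δ f) x s = -lam • sphereIntegral f x s := by
    rw [← sphereIntegral_smul]
    refine sphereIntegral_congr hs.1.le fun y hy => ?_
    have hy : y ∈ ball x r := sphere_subset_ball hs.2 hy
    have hnear := hfφ_near (ball_subset_closedBall hy)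
    rw [(laplacian_congr_nhds hnear).eq_of_nhds, heig y hy, hnear.eq_of_nhds]
  have hf_cont := continuous_sphereIntegral hf.continuous x
  have hf_flux := (contDiff_sphereFlux hf x).continuous
  have hint : ∫ s in (0 : ℝ)..r, s • sphereIntegral f x s =
      ((1 - Real.cos (√lam * r)) / √lam ^ 2) •
        (sphereIntegral f x 0 + (0 : ℝ) • sphereFlux f x 0) := by
    refine intervalIntegral_eq_one_sub_cos_smul_of_hasDerivAt
      (h := fun s => s • sphereIntegral f x s)
      (h' := fun s => sphereIntegral f x s + s • sphereFlux f x s) (Real.sqrt_ne_zero'.2 hlam) hr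
      (zero_smul ℝ _) (by fun_prop)
      (hasDerivAt_smul_sphereIntegral (hf.of_le one_le_two) x) fun s hs => ?_
    refine (hasDerivAt_sphereIntegral_add_smul_sphereFlux hE hf x hs.1).congr_deriv ?_
    rw [hf_eig s hs, Real.sq_sqrt hlam.le, smul_comm]
  have hx : x ∈ closedBall x r := mem_closedBall_self hr
  calc
    _ = ∫ y in closedBall x r, ‖y - x‖⁻¹ • f y :=
      setIntegral_congr_fun measurableSet_closedBall fun y hy => by
        rw [(hfφ_near hy).eq_of_nhds]
    _ = ∫ s in (0 : ℝ)..r, s • sphereIntegral f x s :=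
      setIntegral_closedBall_norm_sub_inv_smul hE hr hf.continuous.continuousOn
    _ = _ := by
      rw [hint, Real.sq_sqrt hlam.le, zero_smul, add_zero, sphereIntegral_zero hE, smul_smul,
        mul_comm, (hfφ_near hx).eq_of_nhds]

end Coulomb

lemma euclidLaplacian_eq_laplacian {d : ℕ} {f : EuclideanSpace ℝ (Fin d) → ℝ}
    {y : EuclideanSpace ℝ (Fin d)} (hf : ContDiffAt ℝ 2 f y) : euclidLaplacian f y = Δ f y := by
  simp [euclidLaplacian, laplacian_eq_sum_fderiv_fderiv (EuclideanSpace.basisFun (Fin d) ℝ) hf]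

/-- **Theorem 4 (n = 3).** If `−Δφ = λφ` on a neighborhood of the closed ball
`B(x,r) ⊂ ℝ³`, then `∫_{‖x−y‖ ≤ r} φ(y)/‖y−x‖ dy = 4π (1 − cos(√λ·r))/λ · φ(x)`. -/
theorem eigenfunction_coulomb_identity (lam : ℝ) (hlam : 0 < lam)
    (x : EuclideanSpace ℝ (Fin 3)) (r : ℝ) (hr : 0 < r)
    (U : Set (EuclideanSpace ℝ (Fin 3))) (hU : IsOpen U) (hBU : Metric.closedBall x r ⊆ U)
    (φ : EuclideanSpace ℝ (Fin 3) → ℝ) (hφ : ContDiffOn ℝ (⊤ : ℕ∞) φ U)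
    (heig : ∀ y ∈ U, euclidLaplacian φ y = -lam * φ y) :
    ∫ y in Metric.closedBall x r, φ y / ‖y - x‖ =
      4 * π * ((1 - Real.cos (Real.sqrt lam * r)) / lam) * φ x := by
  have hφ₂ : ContDiffOn ℝ 2 φ U := contDiffOn_infty.1 hφ 2
  have heig' (y) (hy : y ∈ ball x r) : Δ φ y = -lam • φ y := by
    have hyU : y ∈ U := hBU (ball_subset_closedBall hy)
    rw [← euclidLaplacian_eq_laplacian (hφ₂.contDiffAt (hU.mem_nhds hyU)), heig y hyU, smul_eq_mul]
  simpa only [div_eq_inv_mul, smul_eq_mul] using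
    eigenfunction_coulomb_identity_general finrank_euclideanSpace_fin hlam hr.le hU hBU hφ₂ heig'
end

section
/- (Kozma–Oravecz) Let d ≥ 1 and let S ⊂ ℤ^d \ {0} be a finite symmetric set (S = -S), and let a : S → ℂ satisfy a_{-k} = conj(a_k), so that the trigonometric polynomial f(x) = Σ_{k ∈ S} a_k · exp(2πi⟨k, x⟩) defines a real-valued function on the torus 𝕋^d = ℝ^d/ℤ^d with mean value 0. Then f has a zero in every closed ball (torus metric) of radius r = (1/4) · Σ_{k ∈ S} 1/‖k‖. -/
open scoped Real

/-- The quotient (torus) distance on `ℝ^d / ℤ^d`, computed between lifts: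
the infimum of Euclidean distances between `x` and all `ℤ^d`-translates of `y`. -/
noncomputable def torusDist {d : ℕ} (x y : EuclideanSpace ℝ (Fin d)) : ℝ :=
  ⨅ m : Fin d → ℤ, dist x (y + (WithLp.equiv 2 (Fin d → ℝ)).symm fun i => (m i : ℝ))

/-! If `f (x + 2v) = -f x`, then averaging over translation by `±v` annihilates `f`, and wherever
the average of a function is nonpositive, so is one of its two translates. Averaging over `±vᵢ` for
every term of a finite sum gives `0`, so undoing the averages one at a time moves any point `x₀` by
at most `∑ ‖vᵢ‖` to a point where the sum is nonpositive. The same holds for the negative of the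
sum, and the intermediate value theorem gives a zero in that ball. A wave of frequency `ξ` changes
sign under translation by half a period, i.e. by twice a vector of length `1 / (4‖ξ‖)`. -/

section Antiperiodic

open Function Metric

variable {ι E R : Type*} [AddCommGroup R]

theorem antiperiodic_add_translates [AddCommGroup E] {g : E → R} {c : E} (hg : Antiperiodic g c)
    (v : E) : Antiperiodic (fun x => g (x + v) + g (x - v)) c := fun x => by
  simp only [hg.add_const v x, hg.sub_const v x, neg_add]

theorem add_translates_eq_zero_of_antiperiodic [AddCommGroup E] {g : E → R} {v : E}
    (hg : Antiperiodic g (2 • v)) (x : E) : g (x + v) + g (x - v) = 0 := by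
  have hshift : x - v + 2 • v = x + v := by rw [two_nsmul]; abel
  rw [← hshift, hg, neg_add_cancel]

variable [LinearOrder R] [IsOrderedAddMonoid R]

theorem exists_mem_closedBall_sum_nonpos_of_antiperiodic [SeminormedAddCommGroup E] (s : Finset ι)
    {f : ι → E → R} {v : ι → E} (hf : ∀ i ∈ s, Antiperiodic (f i) (2 • v i)) (x₀ : E) :
    ∃ y ∈ closedBall x₀ (∑ i ∈ s, ‖v i‖), ∑ i ∈ s, f i y ≤ 0 := by
  classical
  induction s using Finset.induction_on generalizing f with
  | empty => exact ⟨x₀, by simp⟩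
  | insert k s hk ih =>
    rw [Finset.forall_mem_insert] at hf
    obtain ⟨y, hy, hneg⟩ := ih fun i hi => antiperiodic_add_translates (hf.2 i hi) (v k)
    have hsum : ∑ i ∈ insert k s, f i (y + v k) + ∑ i ∈ insert k s, f i (y - v k) ≤ 0 := by
      rwa [← Finset.sum_add_distrib, Finset.sum_insert hk,
        add_translates_eq_zero_of_antiperiodic hf.1, zero_add]
    have hball : ∀ w, ‖w - y‖ = ‖v k‖ → w ∈ closedBall x₀ (∑ i ∈ insert k s, ‖v i‖) := fun w hw =>
      calc dist w x₀ ≤ dist w y + dist y x₀ := dist_triangle _ _ _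
        _ ≤ ‖v k‖ + ∑ i ∈ s, ‖v i‖ := add_le_add (by rw [dist_eq_norm, hw]) hy
        _ = ∑ i ∈ insert k s, ‖v i‖ := by rw [Finset.sum_insert hk]
    rcases le_total (∑ i ∈ insert k s, f i (y + v k)) 0 with hplus | hplus
    · exact ⟨y + v k, hball _ (by simp), hplus⟩
    · exact ⟨y - v k, hball _ (by simp), (le_add_of_nonneg_left hplus).trans hsum⟩

theorem exists_mem_closedBall_sum_eq_zero_of_antiperiodic [SeminormedAddCommGroup E]
    [NormedSpace ℝ E] [TopologicalSpace R] [OrderClosedTopology R] [ContinuousAdd R] {s : Finset ι}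
    {f : ι → E → R} {v : ι → E} (hcont : ∀ i ∈ s, Continuous (f i))
    (hf : ∀ i ∈ s, Antiperiodic (f i) (2 • v i)) (x₀ : E) :
    ∃ y ∈ closedBall x₀ (∑ i ∈ s, ‖v i‖), ∑ i ∈ s, f i y = 0 := by
  obtain ⟨y, hy, hy_nonpos⟩ := exists_mem_closedBall_sum_nonpos_of_antiperiodic s hf x₀
  obtain ⟨z, hz, hz_nonpos⟩ := exists_mem_closedBall_sum_nonpos_of_antiperiodic s
    (f := fun i x => -f i x) (fun i hi x => congrArg Neg.neg (hf i hi x)) x₀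
  rw [Finset.sum_neg_distrib, neg_nonpos] at hz_nonpos
  exact (convex_closedBall x₀ _).isPreconnected.intermediate_value hy hz
    (continuous_finsetSum s hcont).continuousOn ⟨hy_nonpos, hz_nonpos⟩

end Antiperiodic

section TrigPoly

open Metric
open scoped FourierTransform RealInnerProductSpace ComplexConjugate

variable {ι E : Type*} [SeminormedAddCommGroup E] [InnerProductSpace ℝ E]

/-- The trigonometric polynomial `x ↦ ∑ i ∈ s, a i * exp (2πi ⟪ξ i, x⟫)`. The frequencies `ξ i` are
arbitrary vectors of an inner product space, so the function need not be periodic. -/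
noncomputable def trigPoly (s : Finset ι) (ξ : ι → E) (a : ι → ℂ) (x : E) : ℂ :=
  ∑ i ∈ s, a i * 𝐞 ⟪ξ i, x⟫

theorem trigPoly_im_eq_zero [InvolutiveNeg ι] {s : Finset ι} {ξ : ι → E} {a : ι → ℂ}
    (hs : ∀ i ∈ s, -i ∈ s) (hξ : ∀ i ∈ s, ξ (-i) = -ξ i) (ha : ∀ i ∈ s, a (-i) = conj (a i))
    (x : E) : (trigPoly s ξ a x).im = 0 := by
  rw [← Complex.conj_eq_iff_im, trigPoly, map_sum]
  refine Finset.sum_nbij' Neg.neg Neg.neg hs hs (fun i _ => neg_neg i) (fun i _ => neg_neg i)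
    fun i hi => ?_
  rw [map_mul, ha i hi, hξ i hi, inner_neg_left, AddChar.map_neg_eq_inv, Circle.coe_inv_eq_conj]

/-- The displacement along `ξ` by a quarter of the period of the wave `x ↦ exp (2πi ⟪ξ, x⟫)`; a
vector of norm `0` when `‖ξ‖ = 0`. -/
noncomputable def quarterPeriod (ξ : E) : E := (4 * ‖ξ‖ ^ 2)⁻¹ • ξ

theorem norm_quarterPeriod (ξ : E) : ‖quarterPeriod ξ‖ = 1 / 4 * (1 / ‖ξ‖) := by
  rw [quarterPeriod, norm_smul, Real.norm_of_nonneg (by positivity)]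
  field_simp

theorem inner_quarterPeriod {ξ : E} (hξ : ‖ξ‖ ≠ 0) : ⟪ξ, quarterPeriod ξ⟫ = 1 / 4 := by
  rw [quarterPeriod, real_inner_smul_right, real_inner_self_eq_norm_sq]
  field_simp

theorem fourierChar_one_half : (𝐞 (1 / 2) : ℂ) = -1 := by
  rw [Real.fourierChar_apply, mul_one_div, mul_div_cancel_left₀ π two_ne_zero, Complex.exp_pi_mul_I]

theorem antiperiodic_re_mul_fourierChar_inner (c : ℂ) {ξ : E} (hξ : ‖ξ‖ ≠ 0) :
    Function.Antiperiodic (fun x => (c * 𝐞 ⟪ξ, x⟫).re) (2 • quarterPeriod ξ) := fun x => by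
  have hhalf : ⟪ξ, 2 • quarterPeriod ξ⟫ = 1 / 2 := by
    rw [two_nsmul, inner_add_right, inner_quarterPeriod hξ]
    norm_num
  simp only [inner_add_right, hhalf, AddChar.map_add_eq_mul, Circle.coe_mul, fourierChar_one_half,
    mul_neg, mul_one, Complex.neg_re]

theorem kozma_oravecz_general {s : Finset ι} {ξ : ι → E} (hξ : ∀ i ∈ s, ‖ξ i‖ ≠ 0) (a : ι → ℂ)
    (x₀ : E) :
    ∃ y ∈ closedBall x₀ (1 / 4 * ∑ i ∈ s, 1 / ‖ξ i‖), (trigPoly s ξ a y).re = 0 := by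
  simp only [trigPoly, Complex.re_sum, Finset.mul_sum, ← norm_quarterPeriod]
  exact exists_mem_closedBall_sum_eq_zero_of_antiperiodic (fun i _ => by fun_prop)
    (fun i hi => antiperiodic_re_mul_fourierChar_inner (a i) (hξ i hi)) x₀

end TrigPoly

section Lattice

open scoped RealInnerProductSpace

variable {d : ℕ}

/-- The integer vector `k` as a point of Euclidean space, so that `‖latticePoint k‖` is the
Euclidean norm of `k`. -/
noncomputable def latticePoint (k : Fin d → ℤ) : EuclideanSpace ℝ (Fin d) :=
  WithLp.toLp 2 fun i => (k i : ℝ)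

theorem latticePoint_neg (k : Fin d → ℤ) : latticePoint (-k) = -latticePoint k := by
  ext i; simp [latticePoint]

theorem latticePoint_ne_zero {k : Fin d → ℤ} (hk : k ≠ 0) : latticePoint k ≠ 0 := fun h =>
  hk <| funext fun i => by simpa [latticePoint] using congrArg (· i) h

theorem norm_latticePoint (k : Fin d → ℤ) : ‖latticePoint k‖ = √(∑ i, (k i : ℝ) ^ 2) := by
  simp [latticePoint, EuclideanSpace.norm_eq]

theorem trigPoly_latticePoint (s : Finset (Fin d → ℤ)) (a : (Fin d → ℤ) → ℂ)
    (x : EuclideanSpace ℝ (Fin d)) :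
    trigPoly s latticePoint a x =
      ∑ k ∈ s, a k * Complex.exp (2 * (π : ℂ) * Complex.I * ∑ i, (k i : ℂ) * (x i : ℂ)) := by
  refine Finset.sum_congr rfl fun k _ => ?_
  have hinner : ⟪latticePoint k, x⟫ = ∑ i, (k i : ℝ) * x i := by
    simp [latticePoint, PiLp.inner_apply, mul_comm]
  rw [Real.fourierChar_apply, hinner]
  push_cast
  ring_nf

theorem torusDist_le_dist (x y : EuclideanSpace ℝ (Fin d)) : torusDist x y ≤ dist x y := by
  have hbdd : BddBelow (Set.range fun m : Fin d → ℤ => dist x (y + latticePoint m)) :=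
    ⟨0, Set.forall_mem_range.mpr fun _ => dist_nonneg⟩
  have hzero : latticePoint (0 : Fin d → ℤ) = 0 := by ext i; simp [latticePoint]
  calc torusDist x y ≤ dist x (y + latticePoint 0) := ciInf_le hbdd 0
    _ = dist x y := by rw [hzero, add_zero]

end Lattice

/-- **Kozma–Oravecz.** A real-valued, mean-zero trigonometric polynomial on `𝕋^d`
with frequency set `S` has a zero in every closed torus ball of radius
`(1/4) · Σ_{k ∈ S} 1/‖k‖`. -/
theorem kozma_oravecz {d : ℕ} (hd : 1 ≤ d)
    (S : Finset (Fin d → ℤ)) (hS0 : (0 : Fin d → ℤ) ∉ S)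
    (hSsym : ∀ k ∈ S, -k ∈ S)
    (a : (Fin d → ℤ) → ℂ) (ha : ∀ k ∈ S, a (-k) = starRingEnd ℂ (a k))
    (f : EuclideanSpace ℝ (Fin d) → ℂ)
    (hf : ∀ x, f x = ∑ k ∈ S, a k *
      Complex.exp (2 * (π : ℂ) * Complex.I * ∑ i, (k i : ℂ) * (x i : ℂ)))
    (x₀ : EuclideanSpace ℝ (Fin d)) :
    ∃ y : EuclideanSpace ℝ (Fin d),
      torusDist y x₀ ≤ (1 / 4) * ∑ k ∈ S, 1 / Real.sqrt (∑ i, (k i : ℝ) ^ 2) ∧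
      f y = 0 := by
  obtain rfl : f = trigPoly S latticePoint a :=
    funext fun x => (hf x).trans (trigPoly_latticePoint S a x).symm
  obtain ⟨y, hy, hre⟩ := kozma_oravecz_general (fun k hk =>
    norm_ne_zero_iff.mpr (latticePoint_ne_zero (ne_of_mem_of_not_mem hk hS0))) a x₀
  simp only [norm_latticePoint] at hy
  exact ⟨y, (torusDist_le_dist y x₀).trans hy,
    Complex.ext hre (trigPoly_im_eq_zero hSsym (fun k _ => latticePoint_neg k) ha y)⟩
end

section
/- Let n ≥ 3, let x ∈ ℝ^n, and let f be a real-valued function continuous on a neighborhood of x. Define Q(r) = ∫_{‖x−y‖ ≤ r} f(y)/‖x−y‖^{n−2} dy for small r > 0. Then lim_{r → 0⁺} Q(r)/r² = (n ω_n / 2) · f(x), where ω_n is the volume of the unit ball in ℝ^n; in particular Q(0) = 0 and Q'(0) = 0 and, when f is twice differentiable in r through this formula, Q''(0) = n ω_n f(x). -/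
open scoped Real Topology
open MeasureTheory Metric

/-!
The weight `‖x - y‖ ^ (α - n)` is the density of a measure which gives the ball of radius `r` about
`x` the mass `(n ω_n / α) r ^ α`, by integration in polar coordinates. As `f` is continuous at `x`,
its averages over these balls with respect to that measure tend to `f x`. The Newtonian kernel is
the case `α = 2`.
-/

open Filter Module Set

lemma indicator_closedBall_comp_norm_sub {E F : Type*} [SeminormedAddCommGroup E] [Zero F]
    (g : ℝ → F) (x : E) (r : ℝ) :
    (closedBall x r).indicator (fun y ↦ g ‖x - y‖) = fun y ↦ (Iic r).indicator g ‖x - y‖ := by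
  ext y
  simp only [indicator, mem_closedBall', dist_eq_norm, mem_Iic]

lemma pow_mul_rpow_sub_natCast {n : ℕ} (hn : n ≠ 0) (α : ℝ) {t : ℝ} (ht : 0 < t) :
    t ^ (n - 1) * t ^ (α - n) = t ^ (α - 1) := by
  rw [← Real.rpow_natCast, ← Real.rpow_add ht, Nat.cast_pred (Nat.pos_of_ne_zero hn)]
  ring_nf

section Radial

variable {E F : Type*} [NormedAddCommGroup E] [NormedSpace ℝ E] [FiniteDimensional ℝ E]
  [Nontrivial E] [MeasurableSpace E] [BorelSpace E] [NormedAddCommGroup F] [NormedSpace ℝ F]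

lemma integrableOn_closedBall_comp_norm_sub_iff (μ : Measure E) [μ.IsAddHaarMeasure]
    (g : ℝ → F) (x : E) (r : ℝ) :
    IntegrableOn (fun y ↦ g ‖x - y‖) (closedBall x r) μ ↔
      IntegrableOn (fun t ↦ t ^ (finrank ℝ E - 1) • g t) (Ioc 0 r) := by
  rw [← integrable_indicator_iff measurableSet_closedBall, indicator_closedBall_comp_norm_sub,
    integrable_comp_sub_left (fun z ↦ (Iic r).indicator g ‖z‖) x,
    integrable_fun_norm_addHaar μ (f := (Iic r).indicator g)]
  simp only [← indicator_smul_apply (Iic r) (fun t : ℝ ↦ t ^ (finrank ℝ E - 1)) g]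
  rw [integrableOn_indicator_iff measurableSet_Iic, inter_comm, Ioi_inter_Iic]

lemma setIntegral_closedBall_comp_norm_sub (μ : Measure E) [μ.IsAddHaarMeasure]
    (g : ℝ → F) (x : E) (r : ℝ) :
    ∫ y in closedBall x r, g ‖x - y‖ ∂μ =
      finrank ℝ E • μ.real (ball 0 1) • ∫ t in Ioc 0 r, t ^ (finrank ℝ E - 1) • g t := by
  rw [← integral_indicator measurableSet_closedBall, indicator_closedBall_comp_norm_sub,
    integral_sub_left_eq_self (fun z ↦ (Iic r).indicator g ‖z‖), integral_fun_norm_addHaar]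
  simp only [← indicator_smul_apply (Iic r) (fun t : ℝ ↦ t ^ (finrank ℝ E - 1)) g]
  rw [setIntegral_indicator measurableSet_Iic, Ioi_inter_Iic]

variable (μ : Measure E) [μ.IsAddHaarMeasure] {α : ℝ}

lemma integrableOn_closedBall_norm_sub_rpow (hα : 0 < α) (x : E) (r : ℝ) :
    IntegrableOn (fun y ↦ ‖x - y‖ ^ (α - finrank ℝ E)) (closedBall x r) μ := by
  rw [integrableOn_closedBall_comp_norm_sub_iff μ (fun t ↦ t ^ (α - finrank ℝ E))]
  simp only [smul_eq_mul]
  rw [integrableOn_congr_fun (fun t ht ↦ pow_mul_rpow_sub_natCast finrank_pos.ne' α ht.1)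
      measurableSet_Ioc]
  exact (intervalIntegral.intervalIntegrable_rpow' (by linarith)).1

lemma setIntegral_closedBall_norm_sub_rpow (hα : 0 < α) (x : E) {r : ℝ} (hr : 0 ≤ r) :
    ∫ y in closedBall x r, ‖x - y‖ ^ (α - finrank ℝ E) ∂μ =
      finrank ℝ E * μ.real (ball 0 1) / α * r ^ α := by
  rw [setIntegral_closedBall_comp_norm_sub μ (fun t ↦ t ^ (α - finrank ℝ E))]
  simp only [smul_eq_mul, nsmul_eq_mul]
  rw [setIntegral_congr_fun measurableSet_Ioc
      (fun t ht ↦ pow_mul_rpow_sub_natCast finrank_pos.ne' α ht.1),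
    ← intervalIntegral.integral_of_le hr, integral_rpow (.inl (by linarith)), sub_add_cancel,
    Real.zero_rpow hα.ne', sub_zero]
  ring

end Radial

section RieszPotential

variable {E F : Type*} [NormedAddCommGroup E] [NormedSpace ℝ E] [MeasurableSpace E]
  [NormedAddCommGroup F] [NormedSpace ℝ F]

/-- The measure `‖x - y‖ ^ (α - n) dμ(y)` on a space of dimension `n`, whose density is the Riesz
kernel of order `α` with pole `x`, without its customary normalizing constant. -/
noncomputable def rieszMeasure (μ : Measure E) (α : ℝ) (x : E) : Measure E :=
  μ.withDensity fun y ↦ ENNReal.ofReal (‖x - y‖ ^ (α - finrank ℝ E))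

/-- The part of the (unnormalized) Riesz potential of order `α` of `f` at `x` that comes from the
closed ball of radius `r` about `x`. It is the function `Q` of the Newtonian case when `α = 2`. -/
noncomputable def truncatedRieszPotential (μ : Measure E) (α : ℝ) (f : E → F) (x : E) (r : ℝ) :
    F :=
  ∫ y in closedBall x r, ‖x - y‖ ^ (α - finrank ℝ E) • f y ∂μ

lemma truncatedRieszPotential_natCast {k : ℕ} (hk : k ≤ finrank ℝ E) (μ : Measure E) (f : E → F)
    (x : E) (r : ℝ) :
    truncatedRieszPotential μ k f x r =
      ∫ y in closedBall x r, (‖x - y‖ ^ (finrank ℝ E - k))⁻¹ • f y ∂μ := by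
  simp only [truncatedRieszPotential, ← Real.rpow_natCast, ← Real.rpow_neg (norm_nonneg _),
    Nat.cast_sub hk, neg_sub]

lemma truncatedRieszPotential_volume_two {n : ℕ} (hn : 2 ≤ n)
    (f : EuclideanSpace ℝ (Fin n) → ℝ) (x : EuclideanSpace ℝ (Fin n)) (r : ℝ) :
    truncatedRieszPotential volume 2 f x r = ∫ y in closedBall x r, f y / ‖x - y‖ ^ (n - 2) := by
  have h := truncatedRieszPotential_natCast (k := 2) (by rwa [finrank_euclideanSpace_fin])
    volume f x r
  simpa only [finrank_euclideanSpace_fin, smul_eq_mul, inv_mul_eq_div, Nat.cast_ofNat] using h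

lemma truncatedRieszPotential_of_nonpos (μ : Measure E) [NullSingletonClass μ] (α : ℝ)
    (f : E → F) (x : E) {r : ℝ} (hr : r ≤ 0) : truncatedRieszPotential μ α f x r = 0 :=
  setIntegral_measure_zero _ ((subsingleton_closedBall x hr).measure_zero μ)

variable [BorelSpace E]

lemma setIntegral_rieszMeasure_closedBall (μ : Measure E) (α : ℝ) (f : E → F) (x : E) (r : ℝ) :
    ∫ y in closedBall x r, f y ∂rieszMeasure μ α x = truncatedRieszPotential μ α f x r := by
  rw [rieszMeasure, setIntegral_withDensity_eq_setIntegral_toReal_smul (by fun_prop)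
    (.of_forall fun _ ↦ ENNReal.ofReal_lt_top) _ measurableSet_closedBall]
  simp only [ENNReal.toReal_ofReal (Real.rpow_nonneg (norm_nonneg _) _), truncatedRieszPotential]

variable [FiniteDimensional ℝ E] [Nontrivial E] {μ : Measure E} [μ.IsAddHaarMeasure] {α : ℝ}

lemma rieszMeasure_closedBall_lt_top (hα : 0 < α) (x : E) (r : ℝ) :
    rieszMeasure μ α x (closedBall x r) < ⊤ := by
  rw [rieszMeasure, withDensity_apply _ measurableSet_closedBall]
  exact (integrableOn_closedBall_norm_sub_rpow μ hα x r).lintegral_lt_top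

lemma measureReal_rieszMeasure_closedBall (hα : 0 < α) (x : E) {r : ℝ} (hr : 0 ≤ r) :
    (rieszMeasure μ α x).real (closedBall x r) =
      finrank ℝ E * μ.real (ball 0 1) / α * r ^ α := by
  calc (rieszMeasure μ α x).real (closedBall x r)
      = ∫ _ in closedBall x r, (1 : ℝ) ∂rieszMeasure μ α x := by
        rw [setIntegral_const, smul_eq_mul, mul_one]
    _ = ∫ y in closedBall x r, ‖x - y‖ ^ (α - finrank ℝ E) ∂μ := by
        simp only [setIntegral_rieszMeasure_closedBall, truncatedRieszPotential, smul_eq_mul,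
          mul_one]
    _ = finrank ℝ E * μ.real (ball 0 1) / α * r ^ α :=
        setIntegral_closedBall_norm_sub_rpow μ hα x hr

variable [CompleteSpace F] {f : E → F} {x : E}

lemma isLittleO_truncatedRieszPotential_sub (hα : 0 < α) (hf : ContinuousAt f x)
    (hfm : StronglyMeasurableAtFilter f (𝓝 x) μ) :
    (fun r ↦ truncatedRieszPotential μ α f x r -
      (finrank ℝ E * μ.real (ball 0 1) / α * r ^ α) • f x) =o[𝓝[>] 0] fun r ↦ r ^ α := by
  have hfm_riesz : StronglyMeasurableAtFilter f (𝓝 x) (rieszMeasure μ α x) := by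
    obtain ⟨s, hs, hfs⟩ := hfm
    exact ⟨s, hs, hfs.mono_ac ((withDensity_absolutelyContinuous μ _).restrict s)⟩
  have hfinite : (rieszMeasure μ α x).FiniteAtFilter (𝓝 x) :=
    ⟨closedBall x 1, closedBall_mem_nhds x one_pos, rieszMeasure_closedBall_lt_top hα x 1⟩
  have hballs : Tendsto (closedBall x) (𝓝[>] 0) (𝓝 x).smallSets :=
    (tendsto_closedBall_smallSets x).mono_left nhdsWithin_le_nhds
  have hmass : (fun r ↦ (rieszMeasure μ α x).real (closedBall x r)) =ᶠ[𝓝[>] 0]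
      fun r ↦ finrank ℝ E * μ.real (ball 0 1) / α * r ^ α :=
    eventually_mem_nhdsWithin.mono fun r hr ↦ measureReal_rieszMeasure_closedBall hα x (le_of_lt hr)
  have hlittleO := (hf.tendsto.mono_left inf_le_left).integral_sub_linear_isLittleO_ae
    hfm_riesz hfinite hballs _ hmass
  simp only [setIntegral_rieszMeasure_closedBall] at hlittleO
  exact hlittleO.trans_isBigO (Asymptotics.isBigO_const_mul_self _ _ _)

lemma tendsto_rpow_inv_smul_truncatedRieszPotential (hα : 0 < α) (hf : ContinuousAt f x)
    (hfm : StronglyMeasurableAtFilter f (𝓝 x) μ) :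
    Tendsto (fun r ↦ (r ^ α)⁻¹ • truncatedRieszPotential μ α f x r) (𝓝[>] 0)
      (𝓝 ((finrank ℝ E * μ.real (ball 0 1) / α) • f x)) := by
  have h := (isLittleO_truncatedRieszPotential_sub hα hf hfm).tendsto_inv_smul_nhds_zero
  rw [← tendsto_sub_nhds_zero_iff]
  refine h.congr' (eventually_mem_nhdsWithin.mono fun r (hr : 0 < r) ↦ ?_)
  rw [smul_sub, smul_smul, mul_comm _ (r ^ α), inv_mul_cancel_left₀ (Real.rpow_pos_of_pos hr α).ne']

lemma hasDerivAt_truncatedRieszPotential_zero (hα : 1 < α) (hf : ContinuousAt f x)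
    (hfm : StronglyMeasurableAtFilter f (𝓝 x) μ) :
    HasDerivAt (truncatedRieszPotential μ α f x) 0 0 := by
  have hzero {r : ℝ} (hr : r ≤ 0) : truncatedRieszPotential μ α f x r = 0 :=
    truncatedRieszPotential_of_nonpos μ α f x hr
  have hpow : Tendsto (fun r : ℝ ↦ r ^ (α - 1)) (𝓝[>] 0) (𝓝 0) := by
    have := (Real.continuousAt_rpow_const 0 (α - 1) (.inr (by linarith))).tendsto
    rw [Real.zero_rpow (by linarith)] at this
    exact this.mono_left nhdsWithin_le_nhds
  rw [hasDerivAt_iff_tendsto_slope_left_right]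
  constructor
  · refine tendsto_const_nhds.congr' (eventually_mem_nhdsWithin.mono fun r hr ↦ ?_)
    rw [slope_def_module, hzero (le_of_lt hr), hzero le_rfl, sub_self, smul_zero]
  · have h := hpow.smul (tendsto_rpow_inv_smul_truncatedRieszPotential
      (zero_lt_one.trans hα) hf hfm)
    rw [zero_smul] at h
    refine h.congr' (eventually_mem_nhdsWithin.mono fun r (hr : 0 < r) ↦ ?_)
    have hcancel : r ^ (α - 1) * (r ^ α)⁻¹ = r⁻¹ := by
      rw [Real.rpow_sub_one hr.ne', div_mul_eq_mul_div,
        mul_inv_cancel₀ (Real.rpow_pos_of_pos hr α).ne', one_div]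
    rw [smul_smul, hcancel, slope_def_module, hzero le_rfl, sub_zero, sub_zero]

theorem newtonian_mass_asymptotics_general (hα : 0 < α) (hf : ContinuousAt f x)
    (hfm : StronglyMeasurableAtFilter f (𝓝 x) μ) :
    Tendsto (fun r ↦ (r ^ α)⁻¹ • truncatedRieszPotential μ α f x r) (𝓝[>] 0)
      (𝓝 ((finrank ℝ E * μ.real (ball 0 1) / α) • f x)) ∧
    truncatedRieszPotential μ α f x 0 = 0 ∧
    (1 < α → HasDerivAt (truncatedRieszPotential μ α f x) 0 0) :=
  ⟨tendsto_rpow_inv_smul_truncatedRieszPotential hα hf hfm,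
    truncatedRieszPotential_of_nonpos μ α f x le_rfl,
    fun h ↦ hasDerivAt_truncatedRieszPotential_zero h hf hfm⟩

end RieszPotential

/-- For `n ≥ 3`, `f` continuous near `x ∈ ℝⁿ`, the Newtonian-potential mass
`Q(r) = ∫_{‖x−y‖ ≤ r} f(y)/‖x−y‖^{n−2} dy` satisfies
`Q(r)/r² → (nω_n/2)·f(x)` as `r → 0⁺` (with `ω_n` the volume of the unit ball);
in particular `Q(0) = 0` and `Q'(0) = 0`. -/
theorem newtonian_mass_asymptotics {n : ℕ} (hn : 3 ≤ n)
    (x : EuclideanSpace ℝ (Fin n)) (f : EuclideanSpace ℝ (Fin n) → ℝ)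
    (U : Set (EuclideanSpace ℝ (Fin n))) (hU : U ∈ 𝓝 x) (hf : ContinuousOn f U)
    (Q : ℝ → ℝ)
    (hQ : ∀ r : ℝ, Q r = ∫ y in closedBall x r, f y / ‖x - y‖ ^ (n - 2)) :
    Filter.Tendsto (fun r => Q r / r ^ 2) (𝓝[>] 0)
      (𝓝 ((n * (volume (ball (0 : EuclideanSpace ℝ (Fin n)) 1)).toReal / 2) * f x)) ∧
    Q 0 = 0 ∧ HasDerivAt Q 0 0 := by
  have : Nonempty (Fin n) := ⟨0, by lia⟩
  obtain rfl : Q = truncatedRieszPotential volume 2 f x :=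
    funext fun r ↦ (hQ r).trans (truncatedRieszPotential_volume_two (by lia) f x r).symm
  have hfm : StronglyMeasurableAtFilter f (𝓝 x) volume :=
    (hf.mono interior_subset).stronglyMeasurableAtFilter isOpen_interior x
      (mem_interior_iff_mem_nhds.2 hU)
  obtain ⟨hlim, hQ_zero, hderiv⟩ :=
    newtonian_mass_asymptotics_general two_pos (hf.continuousAt hU) hfm
  simp only [Real.rpow_two, smul_eq_mul, inv_mul_eq_div, finrank_euclideanSpace_fin,
    Measure.real] at hlim
  exact ⟨hlim, hQ_zero, hderiv one_lt_two⟩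
end
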